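/- For any disjunctive logic program Π, any set U of atoms that is unfounded on a consistent set L of literals with respect to Π, and any consistent and complete set M of literals over atoms(Π): if L ⊆ M and M ∩ U ≠ ∅, then M is not a stable model of Π. -/

import Mathlib

set_option linter.unusedVariables false
open scoped Classical

namespace AbstractSolvers

/-- Literals over atoms (natural numbers): an atom `a` or its negation `¬ a`. -/
inductive Lit where
  | pos : ℕ → Lit
  | neg : ℕ → Lit
deriving DecidableEq

/-- The complement of a literal. -/
def Lit.comp : Lit → Lit
  | .pos a => .neg a
  | .neg a => .pos a

/-- The atom of a literal. -/
def Lit.atom : Lit → ℕ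
  | .pos a => a
  | .neg a => a

def Lit.isPos : Lit → Bool
  | .pos _ => true
  | .neg _ => false

/-- A disjunctive rule `A ← B`: a head `A` (disjunction of atoms) and a body with a
positive part (atoms) and a negative part (atoms under negation as failure). -/
structure Rule where
  head : Finset ℕ
  pos : Finset ℕ
  neg : Finset ℕ
deriving DecidableEq

/-- A disjunctive logic program: a finite set of disjunctive rules. -/
abbrev Prog := Finset Rule

def Rule.atoms (r : Rule) : Finset ℕ := r.head ∪ r.pos ∪ r.neg

/-- The atoms occurring in a program. -/
def progAtoms (π : Prog) : Finset ℕ := π.sup Rule.atoms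

/-- The atoms occurring in a set of literals. -/
def atomsOfSet (M : Set Lit) : Set ℕ := Lit.atom '' M

/-- A set of literals is consistent if it contains no literal together with its complement. -/
def consistentSet (M : Set Lit) : Prop := ∀ l ∈ M, Lit.comp l ∉ M

/-- `M⁺`: the atoms occurring positively in `M`. -/
def posAtoms (M : Set Lit) : Set ℕ := {a | Lit.pos a ∈ M}

/-- The restriction of a set of literals to a set of atoms. -/
def restrictTo (M : Set Lit) (X : Set ℕ) : Set Lit := {l | l ∈ M ∧ Lit.atom l ∈ X}

/-- `M` is a complete set of literals over `X` if the atoms of `M` are exactly `X`. -/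
def completeOver (M : Set Lit) (X : Set ℕ) : Prop := atomsOfSet M = X

/-- The clause `A ∨ B̄` corresponding to a rule `A ← B` (as its set of literals). -/
def Rule.clause (r : Rule) : Set Lit :=
  (Lit.pos '' ↑r.head) ∪ (Lit.neg '' ↑r.pos) ∪ (Lit.pos '' ↑r.neg)

/-- `M` satisfies the rule `r` viewed as a clause. -/
def satRule (M : Set Lit) (r : Rule) : Prop := ∃ l ∈ Rule.clause r, l ∈ M

/-- A classical model of a program: a consistent and complete set of literals over the atoms
of the program satisfying every rule viewed as a clause. -/
def claModel (π : Prog) (M : Set Lit) : Prop :=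
  consistentSet M ∧ completeOver M ↑(progAtoms π) ∧ ∀ r ∈ π, satRule M r

/-- `r` (of the form `A ∨ a ← B`) is a supporting rule for `a` with respect to `M`
when `M ∩ (B̄ ∪ A) = ∅`. -/
def supportingRule (r : Rule) (a : ℕ) (M : Set Lit) : Prop :=
  a ∈ r.head ∧ (∀ b ∈ r.pos, Lit.neg b ∉ M) ∧ (∀ b ∈ r.neg, Lit.pos b ∉ M) ∧
    ∀ b ∈ r.head, b ≠ a → Lit.pos b ∉ M

/-- A supported model of a program. -/
def supModel (π : Prog) (M : Set Lit) : Prop :=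
  claModel π M ∧ ∀ a, Lit.pos a ∈ M → ∃ r ∈ π, supportingRule r a M

/-- `X` satisfies the reduct `π^Y`. -/
def satReduct (π : Prog) (Y X : Set ℕ) : Prop :=
  ∀ r ∈ π, (∀ b ∈ r.neg, b ∉ Y) → (∀ b ∈ r.pos, b ∈ X) → ∃ a ∈ r.head, a ∈ X

/-- `X` is an answer set of `π`: `X` is minimal among the sets of atoms satisfying `π^X`. -/
def answerSet (π : Prog) (X : Set ℕ) : Prop :=
  satReduct π X X ∧ ∀ Y ⊆ X, satReduct π X Y → Y = X

/-- A stable model of a program: a consistent and complete set `M` of literals over the atoms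
of the program such that `M⁺` is an answer set. -/
def staModel (π : Prog) (M : Set Lit) : Prop :=
  consistentSet M ∧ completeOver M ↑(progAtoms π) ∧ answerSet π (posAtoms M)

/-- `X` is unfounded on `L` with respect to `π`. -/
def unfounded (π : Prog) (L : Set Lit) (X : Set ℕ) : Prop :=
  ∀ a ∈ X, ∀ r ∈ π, a ∈ r.head →
    ((∃ b ∈ r.pos, Lit.neg b ∈ L) ∨ (∃ b ∈ r.neg, Lit.pos b ∈ L)) ∨
    (∃ b ∈ r.pos, b ∈ X) ∨
    (∃ b ∈ r.head, b ∉ X ∧ Lit.pos b ∈ L)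

/-- The three types of models: classical, supported-, and stable. -/
inductive MType where
  | cla | sup | sta

/-- `w`-models. -/
def isModel : MType → Prog → Set Lit → Prop
  | .cla => claModel
  | .sup => supModel
  | .sta => staModel

/-- A propagator condition (`p-condition`) maps a program and a set of literals to a set of
literals. -/
abbrev PCond := Prog → Set Lit → Set Lit

/-- A p-condition yields literals over the atoms of the program. -/
def isPCondition (p : PCond) : Prop :=
  ∀ (π : Prog) (M : Set Lit), ∀ l ∈ p π M, Lit.atom l ∈ progAtoms π

/-- The union of the outcomes of a set of p-conditions. -/
def pcOut (P : Set PCond) (π : Prog) (M : Set Lit) : Set Lit := ⋃ p ∈ P, p π M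

/-- The `UnitPropagate` p-condition. -/
def unitPropagate : PCond := fun π L =>
  {l | l ∉ L ∧ ∃ r ∈ π, l ∈ Rule.clause r ∧ ∀ l' ∈ Rule.clause r, l' ≠ l → Lit.comp l' ∈ L}

/-- The `AllRulesCancelled` p-condition. -/
def allRulesCancelled : PCond := fun π L =>
  {l | ∃ a, l = Lit.neg a ∧ Lit.neg a ∉ L ∧ ∀ r ∈ π, ¬ supportingRule r a L}

/-- The `BackchainTrue` p-condition. -/
def backchainTrue : PCond := fun π L =>
  {l | l ∉ L ∧ ∃ r ∈ π, ∃ a ∈ r.head, Lit.pos a ∈ L ∧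
    ((∃ b ∈ r.head, b ≠ a ∧ l = Lit.neg b) ∨ (∃ b ∈ r.pos, l = Lit.pos b) ∨
      (∃ b ∈ r.neg, l = Lit.neg b)) ∧
    ∀ r' ∈ π, r' ≠ r → ¬ supportingRule r' a L}

/-- The `Unfounded` p-condition. -/
def unfoundedCond : PCond := fun π L =>
  {l | ∃ a, l = Lit.neg a ∧ Lit.neg a ∉ L ∧ consistentSet L ∧
    ∃ X : Set ℕ, a ∈ X ∧ unfounded π L X}

/-- `up = {UnitPropagate}`. -/
def up : Set PCond := {unitPropagate}

/-- `sd = {UnitPropagate, AllRulesCancelled, BackchainTrue}`. -/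
def sd : Set PCond := {unitPropagate, allRulesCancelled, backchainTrue}

/-- `sm = {UnitPropagate, AllRulesCancelled, BackchainTrue, Unfounded}`. -/
def sm : Set PCond := {unitPropagate, allRulesCancelled, backchainTrue, unfoundedCond}

/-- `P` is `w`-sound. -/
def wSound (w : MType) (P : Set PCond) : Prop :=
  ∀ (π : Prog) (M M₁ : Set Lit), isModel w π M₁ → M ⊆ M₁ → pcOut P π M ⊆ M₁

/-- `P` is `w`-complete. -/
def wComplete (w : MType) (P : Set PCond) : Prop :=
  ∀ (π : Prog) (M : Set Lit), consistentSet M → completeOver M ↑(progAtoms π) →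
    (isModel w π M ↔ pcOut P π M = ∅)

/-- `P` is `w`-enforcing: both `w`-sound and `w`-complete. -/
def wEnforcing (w : MType) (P : Set PCond) : Prop := wSound w P ∧ wComplete w P

abbrev GenFun := Prog → Prog
abbrev WitFun := Prog → Set Lit → Prog

/-- `M` covers `π` when `atoms(π) ⊆ atoms(M)`. -/
def covers (M : Set Lit) (π : Prog) : Prop := (↑(progAtoms π) : Set ℕ) ⊆ atomsOfSet M

/-- A generating (program) function. -/
def isGenFun (g : GenFun) : Prop :=
  ∀ π : Prog, (↑(progAtoms π) : Set ℕ) ⊆ (↑(progAtoms (g π)) : Set ℕ)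

/-- A witness (program) function: on consistent covering sets of literals it yields
a non-disjunctive program. -/
def isWitFun (t : WitFun) : Prop :=
  ∀ (π : Prog) (M : Set Lit), consistentSet M → covers M π → ∀ r ∈ t π M, r.head.card ≤ 1

/-- `g` is `w₁`-approximating with respect to `w`. -/
def approximating (w₁ w : MType) (g : GenFun) : Prop :=
  ∀ π : Prog,
    (∀ L, staModel π L → ∃ L₁, isModel w₁ (g π) L₁ ∧ L = restrictTo L₁ ↑(progAtoms π)) ∧
    (∀ M, isModel w₁ (g π) M → isModel w π (restrictTo M ↑(progAtoms π)))

/-- `t` is `w₁`-ensuring with respect to `w`. -/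
def ensuring (w₁ w : MType) (t : WitFun) : Prop :=
  ∀ (π : Prog) (M : Set Lit), covers M π →
    isModel w π (restrictTo M ↑(progAtoms π)) →
    (staModel π (restrictTo M ↑(progAtoms π)) ↔ ¬ ∃ N, isModel w₁ (t π M) N)

/-- `(P, g)` is an approximating-pair with respect to `w`. -/
def approximatingPair (w : MType) (P : Set PCond) (g : GenFun) : Prop :=
  ∃ w₁, wEnforcing w₁ P ∧ approximating w₁ w g

/-- `(P, t)` is an ensuring-pair with respect to `w`. -/
def ensuringPair (w : MType) (P : Set PCond) (t : WitFun) : Prop :=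
  ∃ w₁, wEnforcing w₁ P ∧ ensuring w₁ w t

/-- An element of a record: a literal annotated as decision (`true`) or not, or `⊥`. -/
inductive RElem where
  | lit : Lit → Bool → RElem
  | bot : RElem
deriving DecidableEq

/-- A record is a string (list) of such elements. -/
abbrev Record := List RElem

def RElem.content : RElem → Option Lit
  | .lit l _ => some l
  | .bot => none

/-- The literal `l` occurs in the record `L` (possibly as a decision literal). -/
def Record.hasLit (L : Record) (l : Lit) : Prop := ∃ d, RElem.lit l d ∈ L

/-- The set of literals of a record. -/
def Record.lits (L : Record) : Set Lit := {l | Record.hasLit L l}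

/-- A record is inconsistent if it contains `⊥` or complementary literals. -/
def Record.incons (L : Record) : Prop :=
  RElem.bot ∈ L ∨ ∃ l, Record.hasLit L l ∧ Record.hasLit L (Lit.comp l)

/-- The record contains no decision literals. -/
def Record.noDec (L : Record) : Prop := ∀ l, RElem.lit l true ∉ L

/-- A record relative to the set `X` of atoms: no repetitions, and all literals over `X`. -/
def Record.wf (L : Record) (X : Set ℕ) : Prop :=
  (L.map RElem.content).Nodup ∧ ∀ l, Record.hasLit L l → Lit.atom l ∈ X

/-- An abstract transition graph, with a distinguished initial node, a `Failstate`,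
and `Ok(L)` nodes. -/
structure AbsGraph (σ : Type) where
  nodes : Set σ
  step : σ → σ → Prop
  init : σ
  fail : σ
  okP : σ → Prop
  okLits : σ → Set Lit

/-- The edges of the graph: steps between nodes of the graph. -/
def AbsGraph.edge {σ : Type} (G : AbsGraph σ) (s s' : σ) : Prop :=
  s ∈ G.nodes ∧ s' ∈ G.nodes ∧ G.step s s'

/-- The atoms of a family of sets of literals. -/
def atomsOfFam (N : Set (Set Lit)) : Set ℕ := ⋃ M ∈ N, atomsOfSet M

/-- The graph `G` checks the set `N` of sets of literals. -/
def checks {σ : Type} (G : AbsGraph σ) (N : Set (Set Lit)) : Prop :=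
  G.nodes.Finite ∧
  (∀ s : σ, ¬ Relation.TransGen G.edge s s) ∧
  (∀ s ∈ G.nodes, (∀ s', ¬ G.edge s s') → s = G.fail ∨ G.okP s) ∧
  (∀ s : σ, Relation.ReflTransGen G.edge G.init s → G.okP s →
    restrictTo (G.okLits s) (atomsOfFam N) ∈ N) ∧
  (Relation.ReflTransGen G.edge G.init G.fail ↔ N = ∅)

/-- Applicability of the `Conclude` rule. -/
def concludeApp (L : Record) : Prop := Record.incons L ∧ Record.noDec L

/-- Applicability of the `Backtrack` rule. -/
def backtrackApp (L : Record) : Prop :=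
  ∃ L₁ l L₂, L = L₁ ++ RElem.lit l true :: L₂ ∧ Record.incons L ∧ Record.noDec L₂

/-- Applicability of the `Propagate` rule for the set `P` of p-conditions. -/
def propagateApp (P : Set PCond) (π : Prog) (L : Record) : Prop :=
  ∃ l, l ∈ pcOut P π (Record.lits L)

/-- Applicability of the `Decide` rule over the atoms `X`. -/
def decideApp (X : Finset ℕ) (L : Record) : Prop :=
  ¬ Record.incons L ∧ ∃ l : Lit, Lit.atom l ∈ X ∧ ¬ Record.hasLit L l ∧
    ¬ Record.hasLit L (Lit.comp l)

/-- Basic states: records, `Ok(L)` states, and the `Failstate`. -/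
inductive BState where
  | rcd : Record → BState
  | ok : Record → BState
  | fail : BState

/-- The transition rules of the single-layer DPLL graph template `DPT_P(π)`
(`Conclude`, `Backtrack`, `Propagate`, `Decide`, `Success`). -/
inductive dptStep (P : Set PCond) (π : Prog) : BState → BState → Prop
  | conclude (L : Record) : Record.incons L → Record.noDec L →
      dptStep P π (BState.rcd L) BState.fail
  | backtrack (L₁ : Record) (l : Lit) (L₂ : Record) :
      Record.incons (L₁ ++ RElem.lit l true :: L₂) → Record.noDec L₂ →
      dptStep P π (BState.rcd (L₁ ++ RElem.lit l true :: L₂))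
        (BState.rcd (L₁ ++ [RElem.lit (Lit.comp l) false]))
  | propagate (L : Record) (l : Lit) : l ∈ pcOut P π (Record.lits L) →
      dptStep P π (BState.rcd L) (BState.rcd (L ++ [RElem.lit l false]))
  | decide (L : Record) (l : Lit) : ¬ Record.incons L → Lit.atom l ∈ progAtoms π →
      ¬ Record.hasLit L l → ¬ Record.hasLit L (Lit.comp l) →
      dptStep P π (BState.rcd L) (BState.rcd (L ++ [RElem.lit l true]))
  | success (L : Record) :
      ¬ (concludeApp L ∨ backtrackApp L ∨ propagateApp P π L ∨ decideApp (progAtoms π) L) →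
      dptStep P π (BState.rcd L) (BState.ok L)

/-- The single-layer DPLL graph template `DPT_P(π)`; with `P = up` it is the graph `DP_π`. -/
def DPT (P : Set PCond) (π : Prog) : AbsGraph BState where
  nodes := {s | match s with
    | BState.rcd L => Record.wf L ↑(progAtoms π)
    | BState.ok L => Record.wf L ↑(progAtoms π)
    | BState.fail => True}
  step := dptStep P π
  init := BState.rcd []
  fail := BState.fail
  okP := fun s => ∃ L, s = BState.ok L
  okLits := fun s => match s with
    | BState.ok L => Record.lits L
    | BState.rcd L => Record.lits L
    | BState.fail => ∅

/-- States of the two-layer graph: `(L,R)_s` (label `true` = 𝓛, `false` = 𝓡),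
`Ok(L)`, and `Failstate`. -/
inductive TLState where
  | st : Record → Record → Bool → TLState
  | ok : Record → TLState
  | fail : TLState

/-- `atoms(t, π, X)`: the union of the atoms of `t(π,L)` over all consistent and complete
sets `L` of literals over `X`. -/
def witAtoms (t : WitFun) (π : Prog) (X : Set ℕ) : Set ℕ :=
  ⋃ L ∈ {L : Set Lit | consistentSet L ∧ completeOver L X}, (↑(progAtoms (t π L)) : Set ℕ)

/-- Some left-rule applies to the state `(L, ∅)_𝓛`. -/
def leftApp (P : Set PCond) (gπ : Prog) (L : Record) : Prop :=
  concludeApp L ∨ backtrackApp L ∨ propagateApp P gπ L ∨ decideApp (progAtoms gπ) L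

/-- Some right-rule applies to the state `(L, R)_𝓡` (where `tπ` is the witness program
for `L`). -/
def rightApp (P : Set PCond) (tπ : Prog) (R : Record) : Prop :=
  concludeApp R ∨ backtrackApp R ∨ propagateApp P tπ R ∨ decideApp (progAtoms tπ) R

/-- The transition rules of the two-layer template graph `ST[PL, PR, g, t](π)`. -/
inductive tlStep (PL PR : Set PCond) (g : GenFun) (t : WitFun) (π : Prog) :
    TLState → TLState → Prop
  | concludeL (L : Record) : Record.incons L → Record.noDec L →
      tlStep PL PR g t π (TLState.st L [] true) TLState.fail
  | backtrackL (L₁ : Record) (l : Lit) (L₂ : Record) :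
      Record.incons (L₁ ++ RElem.lit l true :: L₂) → Record.noDec L₂ →
      tlStep PL PR g t π (TLState.st (L₁ ++ RElem.lit l true :: L₂) [] true)
        (TLState.st (L₁ ++ [RElem.lit (Lit.comp l) false]) [] true)
  | propagateL (L : Record) (l : Lit) : l ∈ pcOut PL (g π) (Record.lits L) →
      tlStep PL PR g t π (TLState.st L [] true)
        (TLState.st (L ++ [RElem.lit l false]) [] true)
  | decideL (L : Record) (l : Lit) : ¬ Record.incons L → Lit.atom l ∈ progAtoms (g π) →
      ¬ Record.hasLit L l → ¬ Record.hasLit L (Lit.comp l) →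
      tlStep PL PR g t π (TLState.st L [] true)
        (TLState.st (L ++ [RElem.lit l true]) [] true)
  | cross (L : Record) : ¬ leftApp PL (g π) L →
      tlStep PL PR g t π (TLState.st L [] true) (TLState.st L [] false)
  | concludeR (L R : Record) : Record.incons R → Record.noDec R →
      tlStep PL PR g t π (TLState.st L R false) (TLState.ok L)
  | backtrackR (L R₁ : Record) (l : Lit) (R₂ : Record) :
      Record.incons (R₁ ++ RElem.lit l true :: R₂) → Record.noDec R₂ →
      tlStep PL PR g t π (TLState.st L (R₁ ++ RElem.lit l true :: R₂) false)
        (TLState.st L (R₁ ++ [RElem.lit (Lit.comp l) false]) false)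
  | propagateR (L R : Record) (l : Lit) :
      l ∈ pcOut PR (t π (Record.lits L)) (Record.lits R) →
      tlStep PL PR g t π (TLState.st L R false)
        (TLState.st L (R ++ [RElem.lit l false]) false)
  | decideR (L R : Record) (l : Lit) : ¬ Record.incons R →
      Lit.atom l ∈ progAtoms (t π (Record.lits L)) →
      ¬ Record.hasLit R l → ¬ Record.hasLit R (Lit.comp l) →
      tlStep PL PR g t π (TLState.st L R false)
        (TLState.st L (R ++ [RElem.lit l true]) false)
  | concludeRL (L R : Record) : ¬ rightApp PR (t π (Record.lits L)) R → Record.noDec L →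
      tlStep PL PR g t π (TLState.st L R false) TLState.fail
  | backtrackRL (L₁ : Record) (l : Lit) (L₂ R : Record) :
      ¬ rightApp PR (t π (Record.lits (L₁ ++ RElem.lit l true :: L₂))) R →
      Record.noDec L₂ →
      tlStep PL PR g t π (TLState.st (L₁ ++ RElem.lit l true :: L₂) R false)
        (TLState.st (L₁ ++ [RElem.lit (Lit.comp l) false]) [] true)

/-- The two-layer template graph `ST[PL, PR, g, t](π)`. -/
def TL (PL PR : Set PCond) (g : GenFun) (t : WitFun) (π : Prog) : AbsGraph TLState where
  nodes := {s | match s with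
    | TLState.st L R _ => Record.wf L ↑(progAtoms (g π)) ∧
        Record.wf R (witAtoms t π ↑(progAtoms (g π)))
    | TLState.ok L => Record.wf L ↑(progAtoms (g π))
    | TLState.fail => True}
  step := tlStep PL PR g t π
  init := TLState.st [] [] true
  fail := TLState.fail
  okP := fun s => ∃ L, s = TLState.ok L
  okLits := fun s => match s with
    | TLState.ok L => Record.lits L
    | TLState.st L _ _ => Record.lits L
    | TLState.fail => ∅

/-- The rule corresponding to a clause with positive atoms `P` and negated atoms `N`,
under the identification of CNF formulas with programs. -/
def mkClause (P N : Finset ℕ) : Rule := ⟨∅, N, P⟩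


/-- For any unfounded set `U` on a consistent set `L` of literals with respect
to `π` and any consistent and complete set `M` of literals over `atoms(π)`, if `L ⊆ M` and
`M ∩ U ≠ ∅` (some atom of `U` occurs positively in `M`), then `M` is not a stable model. -/
theorem statement17 (π : Prog) (U : Set ℕ) (L M : Set Lit)
    (hLcons : consistentSet L) (hU : unfounded π L U)
    (hMcons : consistentSet M) (hMcomp : completeOver M ↑(progAtoms π))
    (hsub : L ⊆ M) (hmeet : ∃ a ∈ U, Lit.pos a ∈ M) :
    ¬ staModel π M := by
  rintro ⟨-, -, hsat, hmin⟩
  obtain ⟨a, haU, haM⟩ := hmeet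
  have key : posAtoms M \ U = posAtoms M := by
    apply hmin _ Set.diff_subset
    intro r hr hneg hpos
    obtain ⟨c, hc, hcM⟩ := hsat r hr hneg (fun b hb => (hpos b hb).1)
    by_cases hcU : c ∈ U
    · rcases hU c hcU r hr hc with (⟨b, hb, hbL⟩ | ⟨b, hb, hbL⟩) | ⟨b, hb, hbU⟩ | ⟨b, hb, hbU, hbL⟩
      · exact absurd (hsub hbL) (hMcons _ (hpos b hb).1)
      · exact absurd (hsub hbL) (hneg b hb)
      · exact absurd hbU (hpos b hb).2
      · exact ⟨b, hb, hsub hbL, hbU⟩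
    · exact ⟨c, hc, hcM, hcU⟩
  have h : a ∈ posAtoms M \ U := key.symm ▸ haM
  exact h.2 haU

end AbstractSolvers
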